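/- arXiv:1701.05575 — 4 statements merged into one kernel-verified Lean document; each statement's English description precedes it below -/
import Mathlib

section
/- Let E be a real Banach space and let g : E × ℝ → ℝ be continuous such that the map G : E × ℝ → E × ℝ defined by G(e,t) = (e, g(e,t)) is proper. Assume that no point of E × ℝ has three distinct preimages under G, and that some point of E × ℝ has two distinct preimages under G. Then G is a global fold: there exist homeomorphisms σ₁, σ₂ : E × ℝ → E × ℝ, each of the form σᵢ(e,t) = (e, gᵢ(e,t)) for continuous functions gᵢ : E × ℝ → ℝ, such that (σ₂ ∘ G ∘ σ₁)(e,t) = (e, −|t|) for all (e,t) ∈ E × ℝ. -/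
/-!
Properness makes `g (e, ·)` tend to infinity in absolute value at both ends of `ℝ`, locally
uniformly in `e`; so the sign of `g` near each end is locally constant in `e`, hence constant.
A continuous function on a line with at most two points per fiber cannot cross a level three
times. If the two signs differ, every `g (e, ·)` is therefore injective, which is excluded. If they
agree, we may assume both are negative: then `g (e, ·)` increases strictly up to a peak `m e` and
decreases strictly afterwards. The position `m` of the peak depends continuously on `e`, and
reflecting the graph of `g (e, ·) - g (e, m e)` to the right of the peak turns it into an increasing
bijection `φ e` of `ℝ` with `g (e, t) = g (e, m e) - |φ e t|`.
-/

open Set Filter Function Topology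

section AtMostTwoToOne

variable {α β γ : Type*}

/-- A map is at most two-to-one if no point has three distinct preimages. -/
def AtMostTwoToOne (f : α → β) : Prop :=
  ∀ x y z, f x = f y → f y = f z → x = y ∨ y = z ∨ x = z

namespace AtMostTwoToOne

lemma comp_injective {f : β → γ} (hf : AtMostTwoToOne f) {i : α → β} (hi : Injective i) :
    AtMostTwoToOne (f ∘ i) := fun x y z hxy hyz =>
  (hf (i x) (i y) (i z) hxy hyz).imp (@hi _ _) (Or.imp (@hi _ _) (@hi _ _))

lemma injective_comp {f : α → β} (hf : AtMostTwoToOne f) {i : β → γ} (hi : Injective i) :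
    AtMostTwoToOne (i ∘ f) := fun x y z hxy hyz => hf x y z (hi hxy) (hi hyz)

lemma of_comp {f : α → β} {h : β → γ} (hhf : AtMostTwoToOne (h ∘ f)) : AtMostTwoToOne f :=
  fun x y z hxy hyz => hhf x y z (congrArg h hxy) (congrArg h hyz)

end AtMostTwoToOne

end AtMostTwoToOne

section Peak

variable {α β : Type*}

/-- `f` has its peak at `m` if it increases strictly up to `m` and decreases strictly from `m` on:
it is unimodal with mode `m`. -/
structure IsPeak [Preorder α] [Preorder β] (f : α → β) (m : α) : Prop where
  strictMonoOn : StrictMonoOn f (Iic m)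
  strictAntiOn : StrictAntiOn f (Ici m)

lemma IsPeak.le [LinearOrder α] [Preorder β] {f : α → β} {m : α} (hm : IsPeak f m) (t : α) :
    f t ≤ f m := by
  rcases le_total t m with htm | hmt
  · exact hm.strictMonoOn.monotoneOn htm self_mem_Iic htm
  · exact hm.strictAntiOn.antitoneOn self_mem_Ici hmt hmt

lemma continuous_of_isPeak {E : Type*} [TopologicalSpace E]
    [LinearOrder α] [TopologicalSpace α] [OrderTopology α]
    [LinearOrder β] [TopologicalSpace β] [OrderClosedTopology β]
    {f : E → α → β} (hf : ∀ t, Continuous fun e => f e t)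
    {m : E → α} (hm : ∀ e, IsPeak (f e) (m e)) : Continuous m := by
  refine continuous_iff_continuousAt.2 fun e => tendsto_order.2 ⟨fun a ha => ?_, fun a ha => ?_⟩
  · have h_lt : f e a < f e (m e) := (hm e).strictMonoOn ha.le self_mem_Iic ha
    filter_upwards [(isOpen_lt (hf a) (hf (m e))).mem_nhds h_lt] with x hx
    by_contra! hxa
    exact hx.not_ge ((hm x).strictAntiOn.antitoneOn hxa (hxa.trans ha.le) ha.le)
  · have h_lt : f e a < f e (m e) := (hm e).strictAntiOn self_mem_Ici ha.le ha
    filter_upwards [(isOpen_lt (hf a) (hf (m e))).mem_nhds h_lt] with x hx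
    by_contra! hax
    exact hx.not_ge ((hm x).strictMonoOn.monotoneOn (ha.le.trans hax) hax ha.le)

end Peak

section LinearOrder

variable {α β : Type*} [ConditionallyCompleteLinearOrder α] [TopologicalSpace α] [OrderTopology α]
  [DenselyOrdered α] [LinearOrder β] [TopologicalSpace β] [OrderClosedTopology β] {f : α → β}

lemma AtMostTwoToOne.not_zigzag (hf : AtMostTwoToOne f) (hc : Continuous f) {p q r s : α} {v : β}
    (hpq : p < q) (hqr : q < r) (hrs : r < s)
    (hp : f p < v) (hq : v < f q) (hr : f r < v) (hs : v < f s) : False := by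
  obtain ⟨x, hx, hxv⟩ := intermediate_value_Ioo hpq.le hc.continuousOn ⟨hp, hq⟩
  obtain ⟨y, hy, hyv⟩ := intermediate_value_Ioo' hqr.le hc.continuousOn ⟨hr, hq⟩
  obtain ⟨z, hz, hzv⟩ := intermediate_value_Ioo hrs.le hc.continuousOn ⟨hr, hs⟩
  have hxy : x < y := hx.2.trans hy.1
  have hyz : y < z := hy.2.trans hz.1
  rcases hf x y z (hxv.trans hyv.symm) (hyv.trans hzv.symm) with h | h | h
  exacts [hxy.ne h, hyz.ne h, (hxy.trans hyz).ne h]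

variable [DenselyOrdered β] [NoMinOrder β]

lemma AtMostTwoToOne.lt_of_forall_Icc_le [NoMinOrder α] (hf : AtMostTwoToOne f)
    (hc : Continuous f) (hbot : Tendsto f atBot atBot) {a b m : α} (hab : a < b)
    (hbm : b ≤ m) (hmax : ∀ x ∈ Icc a b, f x ≤ f m) : f a < f b := by
  have not_dip : ∀ {x y}, a < x → x < y → f x < f a → f a ≤ f y → False := by
    intro x y hax hxy hx hy
    obtain ⟨v, hxv, hva⟩ := exists_between hx
    obtain ⟨w, hwv, hwa⟩ := ((hbot.eventually_lt_atBot v).and (eventually_lt_atBot a)).exists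
    exact hf.not_zigzag hc hwa hax hxy hwv hva hxv (hva.trans_le hy)
  by_contra! hba
  have ha_le : f a ≤ f m := hmax a (left_mem_Icc.2 hab.le)
  rcases hba.lt_or_eq with hba | hba
  · exact not_dip hab (hbm.lt_of_ne (by rintro rfl; exact hba.not_ge ha_le)) hba ha_le
  obtain ⟨x, hax, hxb⟩ := exists_between hab
  rcases lt_trichotomy (f x) (f a) with hx | hx | hx
  · exact not_dip hax hxb hx hba.ge
  · rcases hf a x b hx.symm (hx.trans hba.symm) with h | h | h
    exacts [hax.ne h, hxb.ne h, hab.ne h]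
  · obtain ⟨v, hav, hvx⟩ := exists_between hx
    have hvm : v < f m := hvx.trans_le (hmax x ⟨hax.le, hxb.le⟩)
    have hbv : f b < v := hba.trans_lt hav
    exact hf.not_zigzag hc hax hxb (hbm.lt_of_ne (by rintro rfl; exact hbv.not_gt hvm))
      hav hvx hbv hvm

lemma AtMostTwoToOne.strictMono_of_tendsto [NoMinOrder α] (hf : AtMostTwoToOne f)
    (hc : Continuous f) (hbot : Tendsto f atBot atBot) (htop : Tendsto f atTop atTop) :
    StrictMono f := by
  intro a b hab
  obtain ⟨c, -, hmax⟩ :=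
    isCompact_Icc.exists_isMaxOn (nonempty_Icc.2 hab.le) (hc.continuousOn (s := Icc a b))
  obtain ⟨m, hcm, hbm⟩ :=
    ((htop.eventually_ge_atTop (f c)).and (eventually_ge_atTop b)).exists
  exact hf.lt_of_forall_Icc_le hc hbot hab hbm fun x hx => (hmax hx).trans hcm

lemma AtMostTwoToOne.strictAnti_of_tendsto [NoMaxOrder α] (hf : AtMostTwoToOne f)
    (hc : Continuous f) (hbot : Tendsto f atBot atTop) (htop : Tendsto f atTop atBot) :
    StrictAnti f := by
  have hdual : StrictMono (f ∘ OrderDual.ofDual) :=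
    (hf.comp_injective OrderDual.ofDual.injective).strictMono_of_tendsto
      (hc.comp continuous_ofDual) htop hbot
  exact fun a b hab => hdual hab

lemma AtMostTwoToOne.strictMonoOn_Iic [NoMinOrder α] (hf : AtMostTwoToOne f)
    (hc : Continuous f) (hbot : Tendsto f atBot atBot) {m : α} (hmax : ∀ x ≤ m, f x ≤ f m) :
    StrictMonoOn f (Iic m) :=
  fun _ _ _ hbm hab => hf.lt_of_forall_Icc_le hc hbot hab hbm fun x hx => hmax x (hx.2.trans hbm)

lemma AtMostTwoToOne.exists_isPeak [Nonempty α] [NoMinOrder α] [NoMaxOrder α]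
    (hf : AtMostTwoToOne f) (hc : Continuous f) (hbot : Tendsto f atBot atBot)
    (htop : Tendsto f atTop atBot) : ∃ m, IsPeak f m := by
  obtain ⟨m, hmax⟩ := hc.exists_forall_ge ((hbot.sup htop).mono_left cocompact_le_atBot_atTop)
  have hdual : StrictMonoOn (f ∘ OrderDual.ofDual) (Iic (OrderDual.toDual m)) :=
    (hf.comp_injective OrderDual.ofDual.injective).strictMonoOn_Iic
      (hc.comp continuous_ofDual) htop fun x _ => hmax x
  exact ⟨m, hf.strictMonoOn_Iic hc hbot fun x _ => hmax x, fun a ha b hb hab => hdual hb ha hab⟩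

end LinearOrder

section Unfold

variable {f : ℝ → ℝ} {m : ℝ}

/-- The function `f - f m`, with its graph reflected in the horizontal axis to the right of `m`.
It straightens a function with peak `m` into an increasing one. -/
noncomputable def unfoldAt (f : ℝ → ℝ) (m t : ℝ) : ℝ :=
  if t ≤ m then f t - f m else f m - f t

lemma unfoldAt_of_le {t : ℝ} (ht : t ≤ m) : unfoldAt f m t = f t - f m := if_pos ht

lemma unfoldAt_of_ge {t : ℝ} (ht : m ≤ t) : unfoldAt f m t = f m - f t := by
  rcases ht.eq_or_lt with rfl | ht
  · simp [unfoldAt]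
  · exact if_neg ht.not_ge

lemma continuous_unfoldAt {X : Type*} [TopologicalSpace X] {f : X → ℝ → ℝ} {m t : X → ℝ}
    (hf : Continuous (uncurry f)) (hm : Continuous m) (ht : Continuous t) :
    Continuous fun x => unfoldAt (f x) (m x) (t x) := by
  have hfm : Continuous fun x => f x (m x) := hf.comp (continuous_id.prodMk hm)
  have hft : Continuous fun x => f x (t x) := hf.comp (continuous_id.prodMk ht)
  exact (hft.sub hfm).if_le (hfm.sub hft) ht hm fun x hx => by simp [hx]

lemma tendsto_unfoldAt_atTop (htop : Tendsto f atTop atBot) :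
    Tendsto (unfoldAt f m) atTop atTop := by
  refine (tendsto_atTop_add_const_left atTop (f m) (tendsto_neg_atBot_atTop.comp htop)).congr' ?_
  filter_upwards [eventually_ge_atTop m] with t ht
  exact (sub_eq_add_neg _ _).symm.trans (unfoldAt_of_ge ht).symm

lemma tendsto_unfoldAt_atBot (hbot : Tendsto f atBot atBot) :
    Tendsto (unfoldAt f m) atBot atBot := by
  refine (tendsto_atBot_add_const_right atBot (-f m) hbot).congr' ?_
  filter_upwards [eventually_le_atBot m] with t ht
  exact (sub_eq_add_neg _ _).symm.trans (unfoldAt_of_le ht).symm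

namespace IsPeak

lemma strictMono_unfoldAt (hm : IsPeak f m) : StrictMono (unfoldAt f m) := by
  refine StrictMonoOn.Iic_union_Ici (a := m) (fun a ha b hb hab => ?_) fun a ha b hb hab => ?_
  · rw [unfoldAt_of_le ha, unfoldAt_of_le hb]
    exact sub_lt_sub_right (hm.strictMonoOn ha hb hab) _
  · rw [unfoldAt_of_ge ha, unfoldAt_of_ge hb]
    exact sub_lt_sub_left (hm.strictAntiOn ha hb hab) _

lemma sub_abs_unfoldAt (hm : IsPeak f m) (t : ℝ) : f m - |unfoldAt f m t| = f t := by
  have hle := hm.le t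
  rcases le_total t m with ht | ht
  · rw [unfoldAt_of_le ht, abs_of_nonpos (by linarith)]; ring
  · rw [unfoldAt_of_ge ht, abs_of_nonneg (by linarith)]; ring

end IsPeak

end Unfold

section FiberMap

variable {E α β : Type*}

/-- The fiber-preserving map over `E` with second component `g`. -/
def fiberMap (g : E × α → β) (p : E × α) : E × β := (p.1, g p)

lemma fiberMap_injective {g : E × α → β} (hg : ∀ e, Injective fun t => g (e, t)) :
    Injective (fiberMap g) := by
  rintro ⟨e, s⟩ ⟨e', t⟩ h
  obtain ⟨rfl, hst⟩ := Prod.mk.inj h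
  exact congrArg (Prod.mk e) (hg e hst)

lemma AtMostTwoToOne.fiber {g : E × α → β} (hg : AtMostTwoToOne (fiberMap g)) (e : E) :
    AtMostTwoToOne fun t => g (e, t) :=
  .of_comp (h := Prod.mk e) (hg.comp_injective (Prod.mk_right_injective e))

variable [TopologicalSpace E] [TopologicalSpace α] [TopologicalSpace β]

lemma tendsto_cocompact_of_isProperMap_fiberMap [WeaklyLocallyCompactSpace α] {g : E × α → β}
    (hg : IsProperMap (fiberMap g)) (e : E) :
    Tendsto g (𝓝 e ×ˢ cocompact α) (cocompact β) := by
  refine (tendsto_iff_ultrafilter _ _ _).2 fun u hu => (hasBasis_cocompact.tendsto_right_iff).2 ?_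
  intro K hK
  by_contra hnot
  have hgK : ∀ᶠ p in u, g p ∈ K :=
    (Ultrafilter.eventually_not.2 hnot).mono fun _ => not_not.1
  obtain ⟨v, -, hv⟩ := hK.ultrafilter_le_nhds (u.map g) (le_principal_iff.2 hgK)
  have hfst : Tendsto Prod.fst (u : Filter (E × α)) (𝓝 e) := tendsto_fst.mono_left hu
  have hlim : Tendsto (fiberMap g) u (𝓝 (e, v)) := hfst.prodMk_nhds hv
  obtain ⟨x, -, hx⟩ := hg.ultrafilter_le_nhds_of_tendsto hlim
  have hsnd : Tendsto Prod.snd (u : Filter (E × α)) (𝓝 x.2) :=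
    (continuous_snd.tendsto x).mono_left hx
  exact hsnd.not_tendsto (disjoint_nhds_cocompact x.2) (tendsto_snd.mono_left hu)

end FiberMap

section SignAtEnd

variable {E X : Type*} [TopologicalSpace E] [TopologicalSpace X] {l : Filter X}

lemma tendsto_atTop_of_tendsto_cocompact_of_pos {f : X → ℝ} {s : Set X} (hs : IsPreconnected s)
    (hsl : s ∈ l) (hc : ContinuousOn f s) (hne : ∀ x ∈ s, f x ≠ 0)
    (hf : Tendsto f l (cocompact ℝ)) {a : X} (ha : a ∈ s) (hpos : 0 < f a) :
    Tendsto f l atTop := by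
  have hpos_on : ∀ x ∈ s, 0 < f x := by
    intro x hx
    by_contra! hfx
    obtain ⟨y, hy, hy0⟩ := hs.intermediate_value hx ha hc ⟨hfx, hpos.le⟩
    exact hne y hy hy0
  refine (tendsto_norm_cocompact_atTop.comp hf).congr' ?_
  filter_upwards [hsl] with x hx
  exact abs_of_pos (hpos_on x hx)

variable [l.NeBot] {ι : Type*} {S : ι → Set X}

lemma tendsto_atTop_or_atBot_of_tendsto_cocompact (hl : l.HasBasis (fun _ => True) S)
    (hS : ∀ i, IsPreconnected (S i)) {f : X → ℝ} (hc : Continuous f)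
    (hf : Tendsto f l (cocompact ℝ)) : Tendsto f l atTop ∨ Tendsto f l atBot := by
  have hne : ∀ᶠ x in l, f x ≠ 0 := hf isCompact_singleton.compl_mem_cocompact
  obtain ⟨i, -, hi⟩ := hl.mem_iff.1 hne
  have hSl : S i ∈ l := hl.mem_of_mem trivial
  obtain ⟨a, ha⟩ := Filter.nonempty_of_mem hSl
  rcases (hi ha).lt_or_gt with hneg | hpos
  · have hnf : Tendsto (-f) l (cocompact ℝ) :=
      (Homeomorph.neg ℝ).isClosedEmbedding.tendsto_cocompact.comp hf
    exact .inr <| tendsto_neg_atTop_iff.1 <| tendsto_atTop_of_tendsto_cocompact_of_pos (hS i) hSl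
      hc.neg.continuousOn (fun x hx => neg_ne_zero.2 (hi hx)) hnf ha (neg_pos.2 hneg)
  · exact .inl <| tendsto_atTop_of_tendsto_cocompact_of_pos (hS i) hSl hc.continuousOn
      (fun x hx => hi hx) hf ha hpos

variable {g : E × X → ℝ}

lemma isOpen_setOf_tendsto_atTop (hl : l.HasBasis (fun _ => True) S)
    (hS : ∀ i, IsPreconnected (S i)) (hc : Continuous g)
    (hg : ∀ e, Tendsto g (𝓝 e ×ˢ l) (cocompact ℝ)) :
    IsOpen {e | Tendsto (fun t => g (e, t)) l atTop} := by
  refine isOpen_iff_mem_nhds.2 fun e he => ?_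
  have hne : ∀ᶠ p in 𝓝 e ×ˢ l, g p ≠ 0 := hg e isCompact_singleton.compl_mem_cocompact
  obtain ⟨U, hU, V, hV, hUV⟩ := eventually_prod_iff.1 hne
  obtain ⟨i, -, hi⟩ := hl.mem_iff.1 hV
  have hSl : S i ∈ l := hl.mem_of_mem trivial
  obtain ⟨a, ha_pos, ha⟩ := ((he.eventually_gt_atTop 0).and hSl).exists
  have hpos : ∀ᶠ x in 𝓝 e, 0 < g (x, a) :=
    (isOpen_lt continuous_const (by fun_prop)).mem_nhds ha_pos
  filter_upwards [hU, hpos] with x hxU hx_pos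
  exact tendsto_atTop_of_tendsto_cocompact_of_pos (hS i) hSl (by fun_prop)
    (fun t ht => hUV hxU (hi ht)) ((hg x).comp (tendsto_const_nhds.prodMk tendsto_id)) ha hx_pos

lemma forall_tendsto_atTop_or_forall_tendsto_atBot [PreconnectedSpace E]
    (hl : l.HasBasis (fun _ => True) S) (hS : ∀ i, IsPreconnected (S i)) (hc : Continuous g)
    (hg : ∀ e, Tendsto g (𝓝 e ×ˢ l) (cocompact ℝ)) :
    (∀ e, Tendsto (fun t => g (e, t)) l atTop) ∨ ∀ e, Tendsto (fun t => g (e, t)) l atBot := by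
  have hfiber : ∀ e, Tendsto (fun t => g (e, t)) l atTop ∨ Tendsto (fun t => g (e, t)) l atBot :=
    fun e => tendsto_atTop_or_atBot_of_tendsto_cocompact hl hS (by fun_prop)
      ((hg e).comp (tendsto_const_nhds.prodMk tendsto_id))
  have hopen_top : IsOpen {e | Tendsto (fun t => g (e, t)) l atTop} :=
    isOpen_setOf_tendsto_atTop hl hS hc hg
  have hopen_bot : IsOpen {e | Tendsto (fun t => g (e, t)) l atBot} := by
    simpa only [tendsto_neg_atTop_iff] using
      isOpen_setOf_tendsto_atTop (g := fun p => -g p) hl hS hc.neg fun e =>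
        (Homeomorph.neg ℝ).isClosedEmbedding.tendsto_cocompact.comp (hg e)
  have hcompl : {e | Tendsto (fun t => g (e, t)) l atTop}ᶜ =
      {e | Tendsto (fun t => g (e, t)) l atBot} := by
    ext e
    exact ⟨(hfiber e).resolve_left, fun hbot => hbot.not_tendsto disjoint_atBot_atTop⟩
  rcases isClopen_iff.1 ⟨⟨hcompl ▸ hopen_bot⟩, hopen_top⟩ with hempty | huniv
  · exact .inr (eq_univ_iff_forall.1 (hcompl.symm.trans (by rw [hempty, compl_empty])))
  · exact .inl (eq_univ_iff_forall.1 huniv)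

end SignAtEnd

section FiberwiseHomeomorph

variable {E α β : Type*} [TopologicalSpace E]
  [LinearOrder α] [TopologicalSpace α] [OrderTopology α]
  [LinearOrder β] [TopologicalSpace β] [OrderTopology β]

lemma continuous_orderIso_symm {φ : E → α ≃o β} (hφ : ∀ a, Continuous fun e => φ e a) :
    Continuous fun p : E × β => (φ p.1).symm p.2 := by
  refine continuous_iff_continuousAt.2 fun p => tendsto_order.2 ⟨fun a ha => ?_, fun a ha => ?_⟩
  · simp only [OrderIso.lt_symm_apply] at ha ⊢
    exact (isOpen_lt ((hφ a).comp continuous_fst) continuous_snd).mem_nhds ha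
  · simp only [OrderIso.symm_apply_lt] at ha ⊢
    exact (isOpen_lt continuous_snd ((hφ a).comp continuous_fst)).mem_nhds ha

lemma continuous_orderIso {φ : E → α ≃o β} (hφ : ∀ a, Continuous fun e => φ e a) :
    Continuous fun p : E × α => φ p.1 p.2 :=
  continuous_orderIso_symm (φ := fun e => (φ e).symm) fun b =>
    (continuous_orderIso_symm hφ).comp (by fun_prop : Continuous fun e => (e, b))

/-- The fiber-preserving homeomorphism given by a family of order isomorphisms. Pointwise
continuity of the family suffices, as for monotone maps it implies joint continuity. -/
def fiberwiseHomeomorph (φ : E → α ≃o β) (hφ : ∀ a, Continuous fun e => φ e a) :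
    E × α ≃ₜ E × β where
  toFun := fiberMap fun p => φ p.1 p.2
  invFun := fiberMap fun p => (φ p.1).symm p.2
  left_inv p := by simp [fiberMap]
  right_inv p := by simp [fiberMap]
  continuous_toFun := continuous_fst.prodMk (continuous_orderIso hφ)
  continuous_invFun := continuous_fst.prodMk (continuous_orderIso_symm hφ)

end FiberwiseHomeomorph

section GlobalFold

variable {E : Type*} [TopologicalSpace E]

/-- `G` is a global fold if fiber-preserving homeomorphisms of source and target transform it into
`(e, t) ↦ (e, -|t|)`. -/
def IsGlobalFold (G : E × ℝ → E × ℝ) : Prop :=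
  ∃ σ₁ σ₂ : (E × ℝ) ≃ₜ (E × ℝ),
    (∀ p, (σ₁ p).1 = p.1) ∧ (∀ p, (σ₂ p).1 = p.1) ∧ ∀ e t, σ₂ (G (σ₁ (e, t))) = (e, -|t|)

lemma IsGlobalFold.of_neg {g : E × ℝ → ℝ} (hg : IsGlobalFold (fiberMap (-g))) :
    IsGlobalFold (fiberMap g) := by
  obtain ⟨σ₁, σ₂, hσ₁, hσ₂, hfold⟩ := hg
  exact ⟨σ₁, ((Homeomorph.refl E).prodCongr (Homeomorph.neg ℝ)).trans σ₂, hσ₁,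
    fun p => hσ₂ (p.1, -p.2), hfold⟩

lemma isGlobalFold_of_eq_sub_abs {g : E × ℝ → ℝ} {M : E → ℝ} (hM : Continuous M)
    {φ : E → ℝ ≃o ℝ} (hφ : ∀ t, Continuous fun e => φ e t)
    (hg : ∀ e t, g (e, t) = M e - |φ e t|) : IsGlobalFold (fiberMap g) := by
  let τ := fiberwiseHomeomorph (fun e => OrderIso.subRight (M e)) fun t => continuous_const.sub hM
  refine ⟨(fiberwiseHomeomorph φ hφ).symm, τ, fun _ => rfl, fun _ => rfl, fun e t => ?_⟩
  change (e, g (e, (φ e).symm t) - M e) = (e, -|t|)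
  rw [hg, OrderIso.apply_symm_apply, sub_sub_cancel_left]

lemma isGlobalFold_of_tendsto_atBot {g : E × ℝ → ℝ} (hc : Continuous g)
    (hg : ∀ e, AtMostTwoToOne fun t => g (e, t))
    (hbot : ∀ e, Tendsto (fun t => g (e, t)) atBot atBot)
    (htop : ∀ e, Tendsto (fun t => g (e, t)) atTop atBot) : IsGlobalFold (fiberMap g) := by
  choose m hm using fun e => (hg e).exists_isPeak (by fun_prop) (hbot e) (htop e)
  have hm_cont : Continuous m := continuous_of_isPeak (fun t => by fun_prop) hm
  let u (e : E) : ℝ → ℝ := unfoldAt (fun t => g (e, t)) (m e)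
  have hu_surj (e : E) : Surjective (u e) :=
    (continuous_unfoldAt (by fun_prop) continuous_const continuous_id).surjective
      (tendsto_unfoldAt_atTop (htop e)) (tendsto_unfoldAt_atBot (hbot e))
  exact isGlobalFold_of_eq_sub_abs (M := fun e => g (e, m e))
    (φ := fun e => (hm e).strictMono_unfoldAt.orderIsoOfSurjective (u e) (hu_surj e)) (by fun_prop)
    (fun t => continuous_unfoldAt (f := fun e t => g (e, t)) hc hm_cont continuous_const)
    fun e t => ((hm e).sub_abs_unfoldAt t).symm

end GlobalFold

theorem stmt0_general {E : Type*} [TopologicalSpace E] [PreconnectedSpace E] {g : E × ℝ → ℝ}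
    (hproper : IsProperMap (fiberMap g)) (htwo : AtMostTwoToOne (fiberMap g))
    (hinj : ¬ Injective (fiberMap g)) : IsGlobalFold (fiberMap g) := by
  have hc : Continuous g := continuous_snd.comp hproper.continuous
  have hcocompact (e : E) := tendsto_cocompact_of_isProperMap_fiberMap hproper e
  have hbot := forall_tendsto_atTop_or_forall_tendsto_atBot atBot_basis
    (fun _ => isPreconnected_Iic) hc
    fun e => (hcocompact e).mono_left (prod_mono_right _ atBot_le_cocompact)
  have htop := forall_tendsto_atTop_or_forall_tendsto_atBot atTop_basis
    (fun _ => isPreconnected_Ici) hc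
    fun e => (hcocompact e).mono_left (prod_mono_right _ atTop_le_cocompact)
  rcases hbot with hbot | hbot <;> rcases htop with htop | htop
  · exact .of_neg <| isGlobalFold_of_tendsto_atBot hc.neg
      (fun e => (htwo.fiber e).injective_comp neg_injective)
      (fun e => tendsto_neg_atTop_atBot.comp (hbot e))
      (fun e => tendsto_neg_atTop_atBot.comp (htop e))
  · exact absurd (fiberMap_injective fun e =>
      ((htwo.fiber e).strictAnti_of_tendsto (by fun_prop) (hbot e) (htop e)).injective) hinj
  · exact absurd (fiberMap_injective fun e =>
      ((htwo.fiber e).strictMono_of_tendsto (by fun_prop) (hbot e) (htop e)).injective) hinj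
  · exact isGlobalFold_of_tendsto_atBot hc htwo.fiber hbot htop

/-- **Global fold theorem.** Let `E` be a real Banach space and `g : E × ℝ → ℝ` continuous
such that `G (e,t) = (e, g (e,t))` is proper (preimages of compact sets are compact).
If no point has three distinct preimages under `G` and some point has two distinct preimages,
then `G` is a global fold: there are fiber-preserving homeomorphisms `σ₁, σ₂` of `E × ℝ`
with `(σ₂ ∘ G ∘ σ₁) (e, t) = (e, -|t|)`. -/
theorem stmt0 {E : Type*} [NormedAddCommGroup E] [NormedSpace ℝ E] [CompleteSpace E]
    (g : E × ℝ → ℝ) (hg : Continuous g)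
    (G : E × ℝ → E × ℝ) (hG : ∀ p : E × ℝ, G p = (p.1, g p))
    (hproper : ∀ K : Set (E × ℝ), IsCompact K → IsCompact (G ⁻¹' K))
    (hno3 : ∀ p q r : E × ℝ, G p = G q → G q = G r → p = q ∨ q = r ∨ p = r)
    (h2 : ∃ p q : E × ℝ, p ≠ q ∧ G p = G q) :
    ∃ σ₁ σ₂ : (E × ℝ) ≃ₜ (E × ℝ),
      (∀ p : E × ℝ, (σ₁ p).1 = p.1) ∧ (∀ p : E × ℝ, (σ₂ p).1 = p.1) ∧
      ∀ (e : E) (t : ℝ), σ₂ (G (σ₁ (e, t))) = (e, -|t|) := by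
  obtain rfl : G = fiberMap g := funext hG
  have hG_proper : IsProperMap (fiberMap g) :=
    isProperMap_iff_isCompact_preimage.2 ⟨continuous_fst.prodMk hg, hproper⟩
  obtain ⟨p, q, hpq, hGpq⟩ := h2
  exact stmt0_general hG_proper hno3 fun hinj => hpq (hinj hGpq)
end

section
/- Let h : ℝ → ℝ be a continuous function such that h(t) → −∞ as t → +∞ and h(t) → −∞ as t → −∞, and assume that no value of h is attained at three distinct points (for all t₁ < t₂ < t₃, h(t₁), h(t₂), h(t₃) are not all equal). Then there exists a unique T ∈ ℝ such that h is strictly increasing on (−∞, T] and strictly decreasing on [T, ∞); in particular, h attains its global maximum exactly at the point T. -/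
/-!
If `a < b < c` and `h b` were at most both `h a` and `h c`, then, since `h` falls to `-∞` on both
sides, the intermediate value theorem would produce the value `h b` again to the left of `a` and to
the right of `c`: three times in all. So `h` has no such valley, and a function without valleys
rises strictly up to its maximum and falls strictly after it.
-/

open Set Filter

variable {α β : Type*}

/-- Strict quasiconcavity on a linear order: strictly between two points, the function exceeds the
smaller of its two values at them. This makes precise that `h` has no valley; only the order of `α`
matters, so no convex structure is assumed. -/
def StrictQuasiconcave [LinearOrder α] [LinearOrder β] (h : α → β) : Prop :=
  ∀ ⦃a b c⦄, a < b → b < c → min (h a) (h c) < h b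

namespace StrictQuasiconcave

variable [LinearOrder α] [DenselyOrdered α] [LinearOrder β] {h : α → β} {T : α}

theorem lt_of_ne_of_forall_le (hq : StrictQuasiconcave h)
    (hT : ∀ t, h t ≤ h T) {t : α} (ht : t ≠ T) : h t < h T := by
  refine (hT t).lt_of_ne fun heq => ?_
  rcases ht.lt_or_gt with hlt | hgt
  · obtain ⟨m, htm, hmT⟩ := exists_between hlt
    have hm : h T < h m := by simpa only [heq, min_self] using hq htm hmT
    exact hm.not_ge (hT m)
  · obtain ⟨m, hTm, hmt⟩ := exists_between hgt
    have hm : h T < h m := by simpa only [heq, min_self] using hq hTm hmt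
    exact hm.not_ge (hT m)

theorem strictMonoOn_Iic (hq : StrictQuasiconcave h) (hT : ∀ t, h t ≤ h T) :
    StrictMonoOn h (Iic T) := by
  intro x _ y hy hxy
  rcases (mem_Iic.1 hy).eq_or_lt with rfl | hyT
  · exact hq.lt_of_ne_of_forall_le hT hxy.ne
  · exact (min_lt_iff.1 (hq hxy hyT)).resolve_right (hT y).not_gt

theorem strictAntiOn_Ici (hq : StrictQuasiconcave h) (hT : ∀ t, h t ≤ h T) :
    StrictAntiOn h (Ici T) := by
  intro x hx y _ hxy
  rcases (mem_Ici.1 hx).eq_or_lt with rfl | hTx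
  · exact hq.lt_of_ne_of_forall_le hT hxy.ne'
  · exact (min_lt_iff.1 (hq hTx hxy)).resolve_left (hT x).not_gt

end StrictQuasiconcave

section Continuous

variable [ConditionallyCompleteLinearOrder α] [TopologicalSpace α] [OrderTopology α]
  [DenselyOrdered α] [LinearOrder β] [TopologicalSpace β] [OrderClosedTopology β] {h : α → β}

theorem strictQuasiconcave_of_no_value_thrice (hc : Continuous h)
    (htop : Tendsto h atTop atBot) (hbot : Tendsto h atBot atBot)
    (hno3 : ¬ ∃ t₁ t₂ t₃, t₁ ≠ t₂ ∧ t₂ ≠ t₃ ∧ t₁ ≠ t₃ ∧ h t₁ = h t₂ ∧ h t₂ = h t₃) :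
    StrictQuasiconcave h := by
  intro a b c hab hbc
  by_contra! hvalley
  obtain ⟨hb_le_a, hb_le_c⟩ := le_min_iff.1 hvalley
  obtain ⟨x, hxa, hx⟩ := intermediate_value_Iic hc.continuousOn hbot hb_le_a
  obtain ⟨y, hcy, hy⟩ := intermediate_value_Ici' hc.continuousOn htop hb_le_c
  have hxb : x < b := (mem_Iic.1 hxa).trans_lt hab
  have hby : b < y := hbc.trans_le (mem_Ici.1 hcy)
  exact hno3 ⟨x, b, y, hxb.ne, hby.ne, (hxb.trans hby).ne, hx, hy.symm⟩

theorem stmt2_general [Nonempty α] (hc : Continuous h)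
    (htop : Tendsto h atTop atBot) (hbot : Tendsto h atBot atBot)
    (hno3 : ¬ ∃ t₁ t₂ t₃, t₁ ≠ t₂ ∧ t₂ ≠ t₃ ∧ t₁ ≠ t₃ ∧ h t₁ = h t₂ ∧ h t₂ = h t₃) :
    ∃! T, StrictMonoOn h (Iic T) ∧ StrictAntiOn h (Ici T) ∧ ∀ t, t ≠ T → h t < h T := by
  have hq : StrictQuasiconcave h := strictQuasiconcave_of_no_value_thrice hc htop hbot hno3
  obtain ⟨T, hT⟩ :=
    hc.exists_forall_ge ((hbot.sup htop).mono_left cocompact_le_atBot_atTop)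
  refine ⟨T, ⟨hq.strictMonoOn_Iic hT, hq.strictAntiOn_Ici hT,
    fun t ht => hq.lt_of_ne_of_forall_le hT ht⟩, ?_⟩
  rintro S ⟨-, -, hS⟩
  by_contra hne
  exact (hS T (Ne.symm hne)).not_ge (hT S)

end Continuous

/-- A continuous function `h : ℝ → ℝ` tending to `-∞` at both `+∞` and `-∞`, no value of
which is attained at three distinct points, is strictly unimodal: there is a unique `T`
such that `h` is strictly increasing on `(-∞, T]` and strictly decreasing on `[T, ∞)`;
in particular `h` attains its global maximum exactly at `T`. -/
theorem stmt2 (h : ℝ → ℝ) (hc : Continuous h)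
    (htop : Filter.Tendsto h Filter.atTop Filter.atBot)
    (hbot : Filter.Tendsto h Filter.atBot Filter.atBot)
    (hno3 : ¬ ∃ t₁ t₂ t₃ : ℝ, t₁ ≠ t₂ ∧ t₂ ≠ t₃ ∧ t₁ ≠ t₃ ∧ h t₁ = h t₂ ∧ h t₂ = h t₃) :
    ∃! T : ℝ, StrictMonoOn h (Set.Iic T) ∧ StrictAntiOn h (Set.Ici T) ∧
      ∀ t : ℝ, t ≠ T → h t < h T :=
  stmt2_general hc htop hbot hno3
end

section
/- Let E be a metric space and let g : E × ℝ → ℝ be continuous such that the map G : E × ℝ → E × ℝ defined by G(e,t) = (e, g(e,t)) is proper. If for some e₀ ∈ E one has g(e₀,t) → −∞ as t → +∞, then there exists a neighborhood N of e₀ in E such that for every e ∈ N, g(e,t) → −∞ as t → +∞. -/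
/-!
Choose `c` and `a` with `g (e₀, t) < c` for all `t ≥ a`. Since a proper map is closed, the image of
`E × [a, ∞)` under `G` is closed, so for `e` near `e₀` the function `g (e, ·)` omits the value `c`
on `[a, ∞)`; as it lies below `c` at `a`, it stays below `c` on the whole ray. Being proper, it
leaves every compact interval `[b, c]` as `t → +∞`, and the only way left to go is `-∞`.
-/

open Filter Set Topology

section FiberPreserving

variable {E X Y : Type*} [TopologicalSpace E] [TopologicalSpace X] [TopologicalSpace Y]
  {g : E × X → Y}

theorem isProperMap_fiber (hG : IsProperMap fun p : E × X ↦ (p.1, g p)) (e : E) :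
    IsProperMap fun x ↦ g (e, x) := by
  have hg : Continuous g := hG.continuous.snd
  refine isProperMap_iff_ultrafilter.2 ⟨by fun_prop, fun 𝒰 y hy ↦ ?_⟩
  have hG_lim : Tendsto (fun p : E × X ↦ (p.1, g p)) (𝒰.map (Prod.mk e)) (𝓝 (e, y)) :=
    tendsto_map'_iff.2 (tendsto_const_nhds.prodMk_nhds hy)
  obtain ⟨⟨e', x⟩, hx, h_lim⟩ := hG.ultrafilter_le_nhds_of_tendsto hG_lim
  obtain ⟨rfl, rfl⟩ := Prod.mk.inj hx
  exact ⟨x, rfl, (continuous_snd.tendsto (e', x)).comp h_lim⟩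

theorem isOpen_setOf_forall_mem_fiber_ne (hG : IsClosedMap fun p : E × X ↦ (p.1, g p))
    {s : Set X} (hs : IsClosed s) (c : Y) : IsOpen {e | ∀ x ∈ s, g (e, x) ≠ c} := by
  have h_image : IsClosed ((fun p : E × X ↦ (p.1, g p)) '' (Prod.snd ⁻¹' s)) :=
    hG _ (hs.preimage continuous_snd)
  convert h_image.isOpen_compl.preimage (Continuous.prodMk_left c) using 1
  ext e
  simp

end FiberPreserving

theorem tendsto_cocompact_of_isProperMap {X Y : Type*} [TopologicalSpace X] [TopologicalSpace Y]
    {f : X → Y} (hf : IsProperMap f) : Tendsto f (cocompact X) (cocompact Y) :=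
  hasBasis_cocompact.tendsto_right_iff.2 fun _ hK ↦
    (hf.isCompact_preimage hK).compl_mem_cocompact

section LinearOrder

variable {E X R : Type*} [TopologicalSpace E] [TopologicalSpace X]
  [LinearOrder R] [TopologicalSpace R]

theorem tendsto_atBot_of_tendsto_cocompact_of_eventually_le [CompactIccSpace R] {α : Type*}
    {l : Filter α} {f : α → R} (hf : Tendsto f l (cocompact R)) {c : R}
    (hc : ∀ᶠ x in l, f x ≤ c) : Tendsto f l atBot := by
  refine tendsto_atBot.2 fun b ↦ ?_
  filter_upwards [hf isCompact_Icc.compl_mem_cocompact, hc] with x hx hxc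
  by_contra! hbx
  exact hx (mem_Icc.2 ⟨hbx.le, hxc⟩)

theorem forall_mem_lt_of_isPreconnected_of_forall_mem_ne [OrderClosedTopology R] {s : Set X}
    (hs : IsPreconnected s) {f : X → R} (hf : ContinuousOn f s) {a : X} {c : R} (ha : a ∈ s)
    (hac : f a < c) (hne : ∀ x ∈ s, f x ≠ c) : ∀ x ∈ s, f x < c := by
  intro x hx
  by_contra! hcx
  obtain ⟨z, hz, hzc⟩ := hs.intermediate_value ha hx hf ⟨hac.le, hcx⟩
  exact hne z hz hzc

theorem eventually_forall_mem_fiber_lt [OrderClosedTopology R] {g : E × X → R} (hg : Continuous g)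
    (hG : IsClosedMap fun p : E × X ↦ (p.1, g p)) {s : Set X} (hs : IsClosed s)
    (hs' : IsPreconnected s) {e₀ : E} {c : R} (h₀ : ∀ x ∈ s, g (e₀, x) < c) :
    ∀ᶠ e in 𝓝 e₀, ∀ x ∈ s, g (e, x) < c := by
  obtain rfl | ⟨a, ha⟩ := s.eq_empty_or_nonempty
  · simp
  have h_ne : ∀ᶠ e in 𝓝 e₀, ∀ x ∈ s, g (e, x) ≠ c :=
    (isOpen_setOf_forall_mem_fiber_ne hG hs c).mem_nhds fun x hx ↦ (h₀ x hx).ne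
  have h_lt : ∀ᶠ e in 𝓝 e₀, g (e, a) < c :=
    (isOpen_lt (by fun_prop) continuous_const).mem_nhds (h₀ a ha)
  filter_upwards [h_ne, h_lt] with e hne hlt
  exact forall_mem_lt_of_isPreconnected_of_forall_mem_ne hs' (by fun_prop) ha hlt hne

end LinearOrder

theorem stmt5_general {E T R : Type*} [TopologicalSpace E]
    [ConditionallyCompleteLinearOrder T] [TopologicalSpace T] [OrderTopology T]
    [DenselyOrdered T] [NoMaxOrder T]
    [LinearOrder R] [TopologicalSpace R] [OrderClosedTopology R] [CompactIccSpace R] [NoMinOrder R]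
    {g : E × T → R} (hG : IsProperMap fun p : E × T ↦ (p.1, g p)) {e₀ : E}
    (h₀ : Tendsto (fun t ↦ g (e₀, t)) atTop atBot) :
    ∀ᶠ e in 𝓝 e₀, Tendsto (fun t ↦ g (e, t)) atTop atBot := by
  obtain ⟨t₀⟩ : Nonempty T := inferInstance
  obtain ⟨a, ha⟩ := eventually_atTop.1 (h₀.eventually_lt_atBot (g (e₀, t₀)))
  have h_below : ∀ᶠ e in 𝓝 e₀, ∀ t ∈ Ici a, g (e, t) < g (e₀, t₀) :=
    eventually_forall_mem_fiber_lt hG.continuous.snd hG.isClosedMap isClosed_Ici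
      isPreconnected_Ici ha
  filter_upwards [h_below] with e he
  have h_cocompact : Tendsto (fun t ↦ g (e, t)) atTop (cocompact R) :=
    (tendsto_cocompact_of_isProperMap (isProperMap_fiber hG e)).mono_left atTop_le_cocompact
  exact tendsto_atBot_of_tendsto_cocompact_of_eventually_le h_cocompact
    ((eventually_ge_atTop a).mono fun t ht ↦ (he t ht).le)

/-- If `G (e,t) = (e, g (e,t))` is a proper fiber-preserving continuous map on `E × ℝ`
(`E` a metric space) and `g (e₀, t) → -∞` as `t → +∞` for some `e₀`, then the same holds
for all `e` in a neighborhood of `e₀`. -/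
theorem stmt5 {E : Type*} [MetricSpace E]
    (g : E × ℝ → ℝ) (hg : Continuous g)
    (G : E × ℝ → E × ℝ) (hG : ∀ p : E × ℝ, G p = (p.1, g p))
    (hproper : ∀ K : Set (E × ℝ), IsCompact K → IsCompact (G ⁻¹' K))
    (e₀ : E) (h₀ : Filter.Tendsto (fun t => g (e₀, t)) Filter.atTop Filter.atBot) :
    ∃ N ∈ nhds e₀, ∀ e ∈ N, Filter.Tendsto (fun t => g (e, t)) Filter.atTop Filter.atBot := by
  obtain rfl : G = fun p ↦ (p.1, g p) := funext hG
  exact (stmt5_general (isProperMap_iff_isCompact_preimage.2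
    ⟨by fun_prop, fun K hK ↦ hproper K hK⟩) h₀).exists_mem
end

section
/- Let E be a topological space and let g : E × ℝ → ℝ be continuous. Assume that for every e ∈ E there exists T(e) ∈ ℝ such that the function t ↦ g(e,t) is strictly increasing on (−∞, T(e)] and strictly decreasing on [T(e), ∞) (so g(e,·) attains its maximum exactly at T(e), and T(e) is uniquely determined). Then the function e ↦ T(e) is continuous on E, and the maximal-value function e ↦ g(e, T(e)) is continuous on E. -/
/-!
If `a < T e₀`, then `g (e₀, a) < g (e₀, T e₀)`, and by continuity `g (e, a) < g (e, T e₀)` for all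
`e` near `e₀`. So `g (e, ·)` takes a larger value at `T e₀` than at `a < T e₀`, which is impossible
once `g (e, ·)` has passed its peak; hence `a < T e`. Upper bounds for `T e` are symmetric, and
no compactness is needed because unimodality confines the peak using only two sample points.
-/

open Filter Set Topology

/-- A unimodal function with peak `p`, in the weak sense: nondecreasing up to `p` and nonincreasing
from `p` on. Plateaus are allowed, so `f` need not determine `p`; where uniqueness of the maximum
matters it is assumed separately. -/
structure IsUnimodal {X Y : Type*} [Preorder X] [Preorder Y] (f : X → Y) (p : X) : Prop where
  monotoneOn : MonotoneOn f (Iic p)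
  antitoneOn : AntitoneOn f (Ici p)

namespace IsUnimodal

variable {X Y : Type*} [LinearOrder X]

section Preorder

variable [Preorder Y] {f : X → Y} {a b p : X}

theorem lt_peak (hf : IsUnimodal f p) (hab : a < b) (h : f a < f b) : a < p :=
  lt_of_not_ge fun hpa => h.not_ge (hf.antitoneOn hpa (hpa.trans hab.le) hab.le)

theorem peak_lt (hf : IsUnimodal f p) (hab : a < b) (h : f b < f a) : p < b :=
  lt_of_not_ge fun hbp => h.not_ge (hf.monotoneOn (hab.le.trans hbp) hbp hab.le)

end Preorder

variable [TopologicalSpace X] [OrderTopology X]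
  [LinearOrder Y] [TopologicalSpace Y] [OrderClosedTopology Y]

theorem tendsto_peak {ι : Type*} {l : Filter ι} {F : ι → X → Y} {f : X → Y} {p : ι → X} {q : X}
    (hF : ∀ᶠ i in l, IsUnimodal (F i) (p i)) (hq : ∀ t ≠ q, f t < f q)
    (hlim : ∀ t, Tendsto (fun i => F i t) l (𝓝 (f t))) : Tendsto p l (𝓝 q) := by
  have eventually_lt_at_q {a : X} (ha : a ≠ q) : ∀ᶠ i in l, F i a < F i q :=
    (hlim a).eventually_lt (hlim q) (hq a ha)
  refine tendsto_order.2 ⟨fun a ha => ?_, fun b hb => ?_⟩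
  · filter_upwards [hF, eventually_lt_at_q ha.ne] with i hi hlt using hi.lt_peak ha hlt
  · filter_upwards [hF, eventually_lt_at_q hb.ne'] with i hi hlt using hi.peak_lt hb hlt

theorem continuous_peak {E : Type*} [TopologicalSpace E] {F : E → X → Y} {T : E → X}
    (hF : ∀ e, IsUnimodal (F e) (T e)) (hmax : ∀ e, ∀ t ≠ T e, F e t < F e (T e))
    (hcont : ∀ t, Continuous fun e => F e t) : Continuous T :=
  continuous_iff_continuousAt.2 fun e =>
    tendsto_peak (.of_forall hF) (hmax e) fun t => (hcont t).tendsto e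

end IsUnimodal

theorem lt_apply_of_strictMonoOn_Iic_of_strictAntiOn_Ici {X Y : Type*} [LinearOrder X] [Preorder Y]
    {f : X → Y} {p t : X} (hmono : StrictMonoOn f (Iic p)) (hanti : StrictAntiOn f (Ici p))
    (ht : t ≠ p) : f t < f p :=
  ht.lt_or_gt.elim (fun h => hmono h.le self_mem_Iic h) fun h => hanti self_mem_Ici h.le h

theorem stmt7_general {E X Y : Type*} [TopologicalSpace E]
    [LinearOrder X] [TopologicalSpace X] [OrderTopology X]
    [LinearOrder Y] [TopologicalSpace Y] [OrderClosedTopology Y]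
    (g : E × X → Y) (hg : Continuous g) (T : E → X)
    (hT : ∀ e, IsUnimodal (fun t => g (e, t)) (T e))
    (hmax : ∀ e, ∀ t ≠ T e, g (e, t) < g (e, T e)) :
    Continuous T ∧ Continuous (fun e => g (e, T e)) := by
  have hT_cont : Continuous T := IsUnimodal.continuous_peak hT hmax fun t => by fun_prop
  exact ⟨hT_cont, by fun_prop⟩

/-- If `g : E × ℝ → ℝ` is continuous and each height function `t ↦ g (e, t)` is strictly
unimodal with peak `T e` (strictly increasing on `(-∞, T e]`, strictly decreasing on
`[T e, ∞)`), then the peak location `e ↦ T e` and the maximal value `e ↦ g (e, T e)`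
are continuous. -/
theorem stmt7 {E : Type*} [TopologicalSpace E]
    (g : E × ℝ → ℝ) (hg : Continuous g) (T : E → ℝ)
    (hT : ∀ e : E, StrictMonoOn (fun t => g (e, t)) (Set.Iic (T e)) ∧
                   StrictAntiOn (fun t => g (e, t)) (Set.Ici (T e))) :
    Continuous T ∧ Continuous (fun e => g (e, T e)) :=
  stmt7_general g hg T (fun e => ⟨(hT e).1.monotoneOn, (hT e).2.antitoneOn⟩) fun e _ =>
    lt_apply_of_strictMonoOn_Iic_of_strictAntiOn_Ici (hT e).1 (hT e).2
end
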